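/- For every T ∈ 𝒟, the set ℐ(T) is a computability predicate. -/

import Mathlib

set_option maxHeartbeats 1000000

/-! # Terms of λΠ/R (de Bruijn representation) -/

inductive Trm (F : Type) : Type
  | type : Trm F
  | kind : Trm F
  | var : ℕ → Trm F
  | sym : F → Trm F
  | pi : Trm F → Trm F → Trm F
  | app : Trm F → Trm F → Trm F
  | lam : Trm F → Trm F → Trm F

namespace Trm

variable {F : Type}

/-- Lifting of a renaming under a binder. -/
def upRen (ρ : ℕ → ℕ) : ℕ → ℕ
  | 0 => 0
  | n + 1 => ρ n + 1

/-- Renaming of (de Bruijn) variables. -/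
def rename (ρ : ℕ → ℕ) : Trm F → Trm F
  | .type => .type
  | .kind => .kind
  | .var n => .var (ρ n)
  | .sym f => .sym f
  | .pi A B => .pi (rename ρ A) (rename (upRen ρ) B)
  | .app t u => .app (rename ρ t) (rename ρ u)
  | .lam A b => .lam (rename ρ A) (rename (upRen ρ) b)

/-- Lifting of a substitution under a binder. -/
def up (σ : ℕ → Trm F) : ℕ → Trm F
  | 0 => .var 0
  | n + 1 => rename Nat.succ (σ n)

/-- Capture-avoiding (parallel) substitution. -/
def subst (σ : ℕ → Trm F) : Trm F → Trm F
  | .type => .type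
  | .kind => .kind
  | .var n => σ n
  | .sym f => .sym f
  | .pi A B => .pi (subst σ A) (subst (up σ) B)
  | .app t u => .app (subst σ t) (subst σ u)
  | .lam A b => .lam (subst σ A) (subst (up σ) b)

/-- Cons of a term on a substitution: `scons a σ` maps `0` to `a` and `n+1` to `σ n`. -/
def scons (a : Trm F) (σ : ℕ → Trm F) : ℕ → Trm F
  | 0 => a
  | n + 1 => σ n

/-- Substitution of the first free variable: `t[x ↦ a]`. -/
def subst1 (a t : Trm F) : Trm F := subst (scons a .var) t

/-- Shifting of all free variables. -/
def shift : Trm F → Trm F := rename Nat.succ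

/-- Application of a head term to a list of arguments: `appList h [t1,…,tn] = h t1 … tn`. -/
def appList (h : Trm F) : List (Trm F) → Trm F
  | [] => h
  | a :: as => appList (.app h a) as

/-- Free (de Bruijn) variables of a term. -/
def FV : Trm F → Set ℕ
  | .type => ∅
  | .kind => ∅
  | .var n => {n}
  | .sym _ => ∅
  | .pi A B => FV A ∪ {n | n + 1 ∈ FV B}
  | .app t u => FV t ∪ FV u
  | .lam A b => FV A ∪ {n | n + 1 ∈ FV b}

/-- The class 𝕂 of kinds: `K = TYPE | Πx:t.K`. -/
def IsKind : Trm F → Prop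
  | .type => True
  | .pi _ B => IsKind B
  | _ => False

/-- Sorts: `TYPE` and `KIND`. -/
def IsSort (s : Trm F) : Prop := s = .type ∨ s = .kind

/-- The product arity of a term: the number of leading products. -/
def piArity : Trm F → ℕ
  | .pi _ B => piArity B + 1
  | _ => 0

/-- Strip `n` leading products. -/
def piCodN : ℕ → Trm F → Trm F
  | 0, T => T
  | n + 1, .pi _ B => piCodN n B
  | _ + 1, T => T

/-- The first `n` domains of the leading products, as a de Bruijn context
(type of variable `0` first, i.e. innermost first). -/
def teleN : ℕ → Trm F → List (Trm F)
  | 0, _ => []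
  | n + 1, .pi A B => teleN n B ++ [A]
  | _ + 1, _ => []

/-- The full telescope of leading products, as a de Bruijn context. -/
def telescope (T : Trm F) : List (Trm F) := teleN (piArity T) T

/-- The domains of the leading products, outermost first. -/
def piDoms : Trm F → List (Trm F)
  | .pi A B => A :: piDoms B
  | _ => []

end Trm

/-- The subterm relation (reflexive and transitive). -/
inductive Subterm {F : Type} : Trm F → Trm F → Prop
  | refl (t : Trm F) : Subterm t t
  | piL {t A B} : Subterm t A → Subterm t (.pi A B)
  | piR {t A B} : Subterm t B → Subterm t (.pi A B)
  | appL {t u v} : Subterm t u → Subterm t (.app u v)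
  | appR {t u v} : Subterm t v → Subterm t (.app u v)
  | lamL {t A b} : Subterm t A → Subterm t (.lam A b)
  | lamR {t A b} : Subterm t b → Subterm t (.lam A b)

/-! # Rewriting -/

/-- A set of rewriting rules `l → r`. -/
abbrev Rules (F : Type) := Set (Trm F × Trm F)

/-- `R` is a rewriting system: for every rule `l → r`, `FV(r) ⊆ FV(l)` and
`l` is of the form `f l⃗`. -/
def IsRewriteSystem {F : Type} (R : Rules F) : Prop :=
  ∀ p ∈ R, Trm.FV p.2 ⊆ Trm.FV p.1 ∧ ∃ (f : F) (ls : List (Trm F)), p.1 = Trm.appList (.sym f) ls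

/-- A symbol is defined if it heads the left-hand side of some rule. -/
def Defined {F : Type} (R : Rules F) (f : F) : Prop :=
  ∃ (ls : List (Trm F)) (r : Trm F), (Trm.appList (.sym f) ls, r) ∈ R

/-- One-step reduction `→ = →β ∪ →R`: β-reduction together with the closure of the
rules of `R` by substitution and context. -/
inductive Red {F : Type} (R : Rules F) : Trm F → Trm F → Prop
  | beta (A b a : Trm F) : Red R (.app (.lam A b) a) (Trm.subst1 a b)
  | rule {l r : Trm F} (σ : ℕ → Trm F) : (l, r) ∈ R → Red R (Trm.subst σ l) (Trm.subst σ r)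
  | appL {t t' u} : Red R t t' → Red R (.app t u) (.app t' u)
  | appR {t u u'} : Red R u u' → Red R (.app t u) (.app t u')
  | piL {A A' B} : Red R A A' → Red R (.pi A B) (.pi A' B)
  | piR {A B B'} : Red R B B' → Red R (.pi A B) (.pi A B')
  | lamL {A A' b} : Red R A A' → Red R (.lam A b) (.lam A' b)
  | lamR {A b b'} : Red R b b' → Red R (.lam A b) (.lam A b')

/-- Multi-step reduction `→*`. -/
def RedStar {F : Type} (R : Rules F) : Trm F → Trm F → Prop := Relation.ReflTransGen (Red R)

/-- Joinability `↓`. -/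
def Joinable {F : Type} (R : Rules F) (t u : Trm F) : Prop :=
  ∃ v, RedStar R t v ∧ RedStar R u v

/-- Local confluence: `← · → ⊆ →* · *←`. -/
def LocallyConfluent {F : Type} (R : Rules F) : Prop :=
  ∀ t u v, Red R t u → Red R t v → Joinable R u v

/-- `t` is strongly normalizing (terminating): no infinite reduction sequence from `t`. -/
def SN {F : Type} (R : Rules F) (t : Trm F) : Prop := Acc (fun a b => Red R b a) t

/-- The set of strongly normalizing terms. -/
def SNset {F : Type} (R : Rules F) : Set (Trm F) := {t | SN R t}

/-- `t` is in normal form. -/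
def NormalForm {F : Type} (R : Rules F) (t : Trm F) : Prop := ∀ u, ¬ Red R t u

/-- Neutral terms: `(λx:A.t)u v⃗`, `x v⃗`, or `f v⃗` where every rule `f l⃗ → r ∈ R`
satisfies `|l⃗| ≤ |v⃗|`. -/
def Neutral {F : Type} (R : Rules F) (t : Trm F) : Prop :=
  (∃ (A b a : Trm F) (vs : List (Trm F)), t = Trm.appList (.app (.lam A b) a) vs) ∨
  (∃ (x : ℕ) (vs : List (Trm F)), t = Trm.appList (.var x) vs) ∨
  (∃ (f : F) (vs : List (Trm F)), t = Trm.appList (.sym f) vs ∧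
    ∀ (ls : List (Trm F)) (r : Trm F), (Trm.appList (.sym f) ls, r) ∈ R → ls.length ≤ vs.length)

/-- Computability predicates: `S ⊆ SN`, `S` is closed under reduction, and `S` contains
every neutral term all of whose one-step reducts are in `S`. -/
def IsCompPred {F : Type} (R : Rules F) (S : Set (Trm F)) : Prop :=
  S ⊆ SNset R ∧ (∀ t ∈ S, ∀ u, Red R t u → u ∈ S) ∧
  (∀ t, Neutral R t → (∀ u, Red R t u → u ∈ S) → t ∈ S)

/-! # Typing: λP extended with function symbols and conversion modulo `→` -/

/-- The typing rules of λΠ/R: the rules of λP (in de Bruijn presentation) with the extra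
rule (fun) `⊢ f : Θ_f` and conversion up to joinability for `→`. -/
inductive Typing {F : Type} (R : Rules F) (Θ sΘ : F → Trm F) :
    List (Trm F) → Trm F → Trm F → Prop
  | ax : Typing R Θ sΘ [] .type .kind
  | var {Γ A s} : Trm.IsSort s → Typing R Θ sΘ Γ A s →
      Typing R Θ sΘ (A :: Γ) (.var 0) (Trm.shift A)
  | weak {Γ A s b B} : Trm.IsSort s → Typing R Θ sΘ Γ A s → Typing R Θ sΘ Γ b B →
      Typing R Θ sΘ (A :: Γ) (Trm.shift b) (Trm.shift B)
  | prod {Γ A B s} : Trm.IsSort s → Typing R Θ sΘ Γ A .type → Typing R Θ sΘ (A :: Γ) B s →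
      Typing R Θ sΘ Γ (.pi A B) s
  | abs {Γ A b B s} : Trm.IsSort s → Typing R Θ sΘ (A :: Γ) b B →
      Typing R Θ sΘ Γ (.pi A B) s → Typing R Θ sΘ Γ (.lam A b) (.pi A B)
  | app {Γ t a A B} : Typing R Θ sΘ Γ t (.pi A B) → Typing R Θ sΘ Γ a A →
      Typing R Θ sΘ Γ (.app t a) (Trm.subst1 a B)
  | conv {Γ a A B s} : Typing R Θ sΘ Γ a A → Joinable R A B → Typing R Θ sΘ Γ B s →
      Trm.IsSort s → Typing R Θ sΘ Γ a B
  | symb (f : F) : Trm.IsSort (sΘ f) → Typing R Θ sΘ [] (Θ f) (sΘ f) →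
      Typing R Θ sΘ [] (.sym f) (Θ f)

/-- `→` preserves typing (subject reduction). -/
def PresTyping {F : Type} (R : Rules F) (Θ sΘ : F → Trm F) : Prop :=
  ∀ Γ t u T, Typing R Θ sΘ Γ t T → Red R t u → Typing R Θ sΘ Γ u T

/-- A substitution `γ` is well-typed from `Δ` to `Γ` (for a generic typing judgment `Ty`):
for all `(x : T) ∈ Δ`, `Ty Γ (xγ) (Tγ)`. -/
def SubstTyped {F : Type} (Ty : List (Trm F) → Trm F → Trm F → Prop)
    (Γ : List (Trm F)) (γ : ℕ → Trm F) (Δ : List (Trm F)) : Prop :=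
  ∀ i A, Δ[i]? = some A → Ty Γ (γ i) (Trm.subst (fun j => γ (j + i + 1)) A)

/-! # Interpretation of types as computability predicates -/

/-- `𝕀`: partial functions from terms to sets of terms. -/
abbrev Interp (F : Type) := Trm F → Part (Set (Trm F))

/-- Graph inclusion of partial functions. -/
def InterpLE {F : Type} (I J : Interp F) : Prop := ∀ T S, S ∈ I T → S ∈ J T

/-- `I` is the least fixpoint of `φ` on `𝕀` (ordered by graph inclusion). -/
def IsLfpInterp {F : Type} (φ : Interp F → Interp F) (I : Interp F) : Prop :=
  φ I = I ∧ ∀ J, φ J = J → InterpLE I J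

/-- The domain `D(I)`: terminating terms `T` such that whenever `T →* Πx:A.B`,
`A ∈ dom(I)` and `B[x↦a] ∈ dom(I)` for all `a ∈ I(A)`. -/
def domD {F : Type} (R : Rules F) (I : Interp F) : Set (Trm F) :=
  {T | SN R T ∧ ∀ A B, RedStar R T (.pi A B) →
    (I A).Dom ∧ ∀ S ∈ I A, ∀ a ∈ S, (I (Trm.subst1 a B)).Dom}

/-- `{t | ∀ a ∈ I(A), t a ∈ I(B[x↦a])}` (relational reading of the partial function `I`). -/
def piPart {F : Type} (I : Interp F) (A B : Trm F) : Set (Trm F) :=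
  {t | ∀ S ∈ I A, ∀ a ∈ S, ∀ S' ∈ I (Trm.subst1 a B), Trm.app t a ∈ S'}

open Classical in
/-- The monotone function `F : 𝕀 → 𝕀`: `dom(F(I)) = D(I)`; `F(I)(T) = SN` if the normal
form of `T` is not a product; `F(I)(T) = {t | ∀ a ∈ I(A), t a ∈ I(B[x↦a])}` if the normal
form of `T` is `Πx:A.B`. -/
noncomputable def interpF {F : Type} (R : Rules F) (I : Interp F) : Interp F := fun T =>
  ⟨T ∈ domD R I, fun _ =>
    if h : ∃ A B, RedStar R T (.pi A B) ∧ NormalForm R (.pi A B) then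
      piPart I h.choose h.choose_spec.choose
    else SNset R⟩

/-- The value of a partial interpretation at `T` (as a set). -/
def partMem {F : Type} (I : Interp F) (T : Trm F) : Set (Trm F) := {t | ∀ S ∈ I T, t ∈ S}

open Classical in
/-- The interpretation `⟦T⟧σ` of a term `T` wrt a substitution `σ`, relative to the least
fixpoint `I = ℐ` of `interpF`: `⟦s⟧σ = 𝒟` for `s` a sort;
`⟦Πx:A.K⟧σ = {t | ∀ a ∈ ⟦A⟧σ, t a ∈ ⟦K⟧[x↦a,σ]}` for `K` a kind;
`⟦T⟧σ = ℐ(Tσ)` if `T` is neither a kind nor `KIND` and `Tσ ∈ 𝒟`; `⟦T⟧σ = SN` otherwise. -/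
noncomputable def interp {F : Type} (R : Rules F) (I : Interp F) :
    Trm F → (ℕ → Trm F) → Set (Trm F)
  | .type, _ => domD R I
  | .kind, _ => domD R I
  | .pi A B, σ =>
      if Trm.IsKind B then
        {t | ∀ a ∈ interp R I A σ, Trm.app t a ∈ interp R I B (Trm.scons a σ)}
      else if Trm.subst σ (.pi A B) ∈ domD R I then partMem I (Trm.subst σ (.pi A B))
      else SNset R
  | .var n, σ =>
      if Trm.subst σ (.var n) ∈ domD R I then partMem I (Trm.subst σ (.var n)) else SNset R
  | .sym g, σ =>
      if Trm.subst σ (.sym g) ∈ domD R I then partMem I (Trm.subst σ (.sym g)) else SNset R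
  | .app t u, σ =>
      if Trm.subst σ (.app t u) ∈ domD R I then partMem I (Trm.subst σ (.app t u)) else SNset R
  | .lam A b, σ =>
      if Trm.subst σ (.lam A b) ∈ domD R I then partMem I (Trm.subst σ (.lam A b)) else SNset R

/-- `σ ⊨ Γ`: a substitution is adequate wrt an environment. -/
def Models {F : Type} (R : Rules F) (I : Interp F) (σ : ℕ → Trm F) (Γ : List (Trm F)) : Prop :=
  ∀ i A, Γ[i]? = some A → σ i ∈ interp R I A (fun j => σ (j + i + 1))

/-- The typing map `Θ` is adequate: `f ∈ ⟦Θ_f⟧` whenever `⊢ Θ_f : s_f` and `Θ_f ∈ ⟦s_f⟧`. -/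
def Adequate {F : Type} (R : Rules F) (Θ sΘ : F → Trm F) (I : Interp F) : Prop :=
  ∀ f : F, Typing R Θ sΘ [] (Θ f) (sΘ f) → Θ f ∈ interp R I (sΘ f) Trm.var →
    Trm.sym f ∈ interp R I (Θ f) Trm.var

/-- The substitution `[x⃗ ↦ l⃗]` (where `ls` lists the images of variables `0, 1, …`). -/
def mkSubst {F : Type} (ls : List (Trm F)) : ℕ → Trm F := fun i =>
  (ls[i]?).getD (.var (i - ls.length))

/-- Composition of substitutions: `x ↦ (xγ)σ`. -/
def compSubst {F : Type} (γ σ : ℕ → Trm F) : ℕ → Trm F := fun i => Trm.subst σ (γ i)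

/-- The set `ℂ` of terms `f t⃗` with `|t⃗| = arit(Θ_f)`, `⊢ Θ_f : s_f`, `Θ_f ∈ ⟦s_f⟧` and
`[x⃗↦t⃗] ⊨ Γ_f`. -/
def CC {F : Type} (R : Rules F) (Θ sΘ : F → Trm F) (I : Interp F) : Set (Trm F) :=
  {t | ∃ (f : F) (ts : List (Trm F)), t = Trm.appList (.sym f) ts ∧
    ts.length = Trm.piArity (Θ f) ∧
    Typing R Θ sΘ [] (Θ f) (sΘ f) ∧ Θ f ∈ interp R I (sΘ f) Trm.var ∧
    Models R I (mkSubst ts.reverse) (Trm.telescope (Θ f))}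

/-! # Dependency pairs -/

/-- Occurrences of `p` in a term, not at the root, such that `p` is not further applied
(i.e. `p` collects all the arguments of its head at this occurrence). -/
inductive MaxOccNR {F : Type} (p : Trm F) : Trm F → Prop
  | appL {u v} : MaxOccNR p u → MaxOccNR p (.app u v)
  | appR {u v} : MaxOccNR p v → MaxOccNR p (.app u v)
  | appRroot {u} : MaxOccNR p (.app u p)
  | piL {A B} : MaxOccNR p A → MaxOccNR p (.pi A B)
  | piLroot {B} : MaxOccNR p (.pi p B)
  | piR {A B} : MaxOccNR p B → MaxOccNR p (.pi A B)
  | piRroot {A} : MaxOccNR p (.pi A p)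
  | lamL {A b} : MaxOccNR p A → MaxOccNR p (.lam A b)
  | lamLroot {b} : MaxOccNR p (.lam p b)
  | lamR {A b} : MaxOccNR p b → MaxOccNR p (.lam A b)
  | lamRroot {A} : MaxOccNR p (.lam A p)

/-- `p` occurs in `t` as a maximal application. -/
def MaxOcc {F : Type} (p t : Trm F) : Prop := t = p ∨ MaxOccNR p t

/-- Dependency pairs: `f l⃗ > g m⃗` iff there is a rule `f l⃗ → r ∈ R`, `g` is defined and
`g m⃗` is a subterm of `r` such that `m⃗` are all the arguments to which `g` is applied. -/
def DepPair {F : Type} (R : Rules F) (f : F) (ls : List (Trm F)) (g : F)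
    (ms : List (Trm F)) : Prop :=
  Defined R g ∧ ∃ r, (Trm.appList (.sym f) ls, r) ∈ R ∧ MaxOcc (Trm.appList (.sym g) ms) r

/-- `f t⃗ →arg f u⃗`: reduction of exactly one argument. -/
def ArgRed {F : Type} (R : Rules F) (t u : Trm F) : Prop :=
  ∃ (f : F) (pre post : List (Trm F)) (a b : Trm F), Red R a b ∧
    t = Trm.appList (.sym f) (pre ++ a :: post) ∧ u = Trm.appList (.sym f) (pre ++ b :: post)

/-- `>ₛ`: the closure of the dependency pair relation by substitution and left-application:
`f t₁…t_p >ₛ g u₁…u_q` iff there are a dependency pair `f l₁…l_i > g m₁…m_j` with `i ≤ p`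
and `j ≤ q` and a substitution `σ` such that `t_k →* l_kσ` for `k ≤ i` and `m_kσ = u_k`
for `k ≤ j`. -/
def GTsub {F : Type} (R : Rules F) (t u : Trm F) : Prop :=
  ∃ (f g : F) (ts us ls ms : List (Trm F)) (σ : ℕ → Trm F),
    t = Trm.appList (.sym f) ts ∧ u = Trm.appList (.sym g) us ∧
    DepPair R f ls g ms ∧ ls.length ≤ ts.length ∧ ms.length ≤ us.length ∧
    (∀ (k : ℕ) (tk lk : Trm F), ts[k]? = some tk → ls[k]? = some lk → RedStar R tk (Trm.subst σ lk)) ∧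
    (∀ (k : ℕ) (mk : Trm F), ms[k]? = some mk → us[k]? = some (Trm.subst σ mk))

/-- The call relation `≻̃ = →arg* · >ₛ` on `ℂ`. -/
def CallRel {F : Type} (R : Rules F) (Θ sΘ : F → Trm F) (I : Interp F) (t u : Trm F) : Prop :=
  t ∈ CC R Θ sΘ I ∧ u ∈ CC R Θ sΘ I ∧
    ∃ v, Relation.ReflTransGen (ArgRed R) t v ∧ GTsub R v u

/-! # Precedence and well-structured systems -/

/-- `f ⪰ g` (one step): `g` occurs in `Θ_f` or in the right-hand side of a rule of `f`. -/
def PrecBase {F : Type} (R : Rules F) (Θ : F → Trm F) (f g : F) : Prop :=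
  Subterm (.sym g) (Θ f) ∨
  ∃ (ls : List (Trm F)) (r : Trm F), (Trm.appList (.sym f) ls, r) ∈ R ∧ Subterm (.sym g) r

/-- `⪰`: the smallest quasi-order containing `PrecBase`. -/
def Preceq {F : Type} (R : Rules F) (Θ : F → Trm F) : F → F → Prop :=
  Relation.ReflTransGen (PrecBase R Θ)

/-- `≻`: the strict part of `⪰`. -/
def Prec {F : Type} (R : Rules F) (Θ : F → Trm F) (f g : F) : Prop :=
  Preceq R Θ f g ∧ ¬ Preceq R Θ g f

/-- The restricted type system `⊢_{≺ f}`: as `Typing`, but function symbols may only be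
introduced when strictly smaller than `f` in the precedence. -/
inductive LTyp {F : Type} (R : Rules F) (Θ sΘ : F → Trm F) (f : F) :
    List (Trm F) → Trm F → Trm F → Prop
  | ax : LTyp R Θ sΘ f [] .type .kind
  | var {Γ A s} : Trm.IsSort s → LTyp R Θ sΘ f Γ A s →
      LTyp R Θ sΘ f (A :: Γ) (.var 0) (Trm.shift A)
  | weak {Γ A s b B} : Trm.IsSort s → LTyp R Θ sΘ f Γ A s → LTyp R Θ sΘ f Γ b B →
      LTyp R Θ sΘ f (A :: Γ) (Trm.shift b) (Trm.shift B)
  | prod {Γ A B s} : Trm.IsSort s → LTyp R Θ sΘ f Γ A .type → LTyp R Θ sΘ f (A :: Γ) B s →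
      LTyp R Θ sΘ f Γ (.pi A B) s
  | abs {Γ A b B s} : Trm.IsSort s → LTyp R Θ sΘ f (A :: Γ) b B →
      LTyp R Θ sΘ f Γ (.pi A B) s → LTyp R Θ sΘ f Γ (.lam A b) (.pi A B)
  | app {Γ t a A B} : LTyp R Θ sΘ f Γ t (.pi A B) → LTyp R Θ sΘ f Γ a A →
      LTyp R Θ sΘ f Γ (.app t a) (Trm.subst1 a B)
  | conv {Γ a A B s} : LTyp R Θ sΘ f Γ a A → Joinable R A B → LTyp R Θ sΘ f Γ B s →
      Trm.IsSort s → LTyp R Θ sΘ f Γ a B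
  | symb (g : F) : Prec R Θ f g → Trm.IsSort (sΘ g) → LTyp R Θ sΘ f [] (Θ g) (sΘ g) →
      LTyp R Θ sΘ f [] (.sym g) (Θ g)

/-- The arguments `y⃗γ = [y₁γ, …, y_jγ]` of an instantiated dependency pair right-hand
side, where `y_j` is de Bruijn variable `0`. -/
def dpArgs {F : Type} (γ : ℕ → Trm F) (j : ℕ) : List (Trm F) :=
  (List.range j).reverse.map γ

/-- The restricted type system `⊢_{f l⃗}` (computability closure): as `Typing`, except that
types are required to be typable using symbols smaller than `f` only, and function symbols
are introduced either as undefined constants or through instances of dependency pairs of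
`f l⃗`. -/
inductive RTyp {F : Type} (R : Rules F) (Θ sΘ : F → Trm F) (f : F) (ls : List (Trm F)) :
    List (Trm F) → Trm F → Trm F → Prop
  | ax : RTyp R Θ sΘ f ls [] .type .kind
  | var {Γ A s} : Trm.IsSort s → LTyp R Θ sΘ f Γ A s →
      RTyp R Θ sΘ f ls (A :: Γ) (.var 0) (Trm.shift A)
  | weak {Γ A s b B} : Trm.IsSort s → LTyp R Θ sΘ f Γ A s → RTyp R Θ sΘ f ls Γ b B →
      RTyp R Θ sΘ f ls (A :: Γ) (Trm.shift b) (Trm.shift B)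
  | prod {Γ A B s} : Trm.IsSort s → RTyp R Θ sΘ f ls Γ A .type →
      RTyp R Θ sΘ f ls (A :: Γ) B s → RTyp R Θ sΘ f ls Γ (.pi A B) s
  | abs {Γ A b B s} : Trm.IsSort s → RTyp R Θ sΘ f ls (A :: Γ) b B →
      LTyp R Θ sΘ f Γ (.pi A B) s → RTyp R Θ sΘ f ls Γ (.lam A b) (.pi A B)
  | app {Γ t a A B s} : Trm.IsSort s → RTyp R Θ sΘ f ls Γ t (.pi A B) →
      RTyp R Θ sΘ f ls Γ a A → LTyp R Θ sΘ f Γ (.pi A B) s →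
      RTyp R Θ sΘ f ls Γ (.app t a) (Trm.subst1 a B)
  | conv {Γ a A B s s'} : Trm.IsSort s → Trm.IsSort s' → RTyp R Θ sΘ f ls Γ a A →
      Joinable R A B → LTyp R Θ sΘ f Γ B s → LTyp R Θ sΘ f Γ A s' →
      RTyp R Θ sΘ f ls Γ a B
  | dp {Γ : List (Trm F)} (g : F) (γ : ℕ → Trm F) (j : ℕ) :
      j ≤ Trm.piArity (Θ g) → Trm.IsSort (sΘ g) → LTyp R Θ sΘ f [] (Θ g) (sΘ g) →
      (∀ i A, (Trm.teleN j (Θ g))[i]? = some A →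
        RTyp R Θ sΘ f ls Γ (γ i) (Trm.subst (fun k => γ (k + i + 1)) A)) →
      DepPair R f ls g (dpArgs γ j) →
      RTyp R Θ sΘ f ls Γ (Trm.appList (.sym g) (dpArgs γ j)) (Trm.subst γ (Trm.piCodN j (Θ g)))
  | const (g : F) : ¬ Defined R g → Trm.IsSort (sΘ g) → LTyp R Θ sΘ f [] (Θ g) (sΘ g) →
      RTyp R Θ sΘ f ls [] (.sym g) (Θ g)

/-- `R` is well-structured (wrt the assignment `Δ` of an environment to every rule):
(a) `≻` is well-founded; (b) `|l⃗| ≤ arit(Θ_f)` for every rule `f l⃗ → r`;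
(c) `|m⃗| ≤ arit(Θ_g)` for every dependency pair `f l⃗ > g m⃗`;
(d) `Δ_{f l⃗→r} ⊢_{f l⃗} r : U[x⃗↦l⃗]` for every rule `f l⃗ → r`, where `Θ_f = Πx⃗:T⃗.U`. -/
def WellStructured {F : Type} (R : Rules F) (Θ sΘ : F → Trm F)
    (Δ : Trm F → Trm F → List (Trm F)) : Prop :=
  WellFounded (fun g f => Prec R Θ f g) ∧
  (∀ l r, (l, r) ∈ R → ∀ (f : F) ls, l = Trm.appList (.sym f) ls →
    ls.length ≤ Trm.piArity (Θ f)) ∧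
  (∀ (f : F) ls (g : F) ms, DepPair R f ls g ms → ms.length ≤ Trm.piArity (Θ g)) ∧
  (∀ l r, (l, r) ∈ R → ∀ (f : F) ls, l = Trm.appList (.sym f) ls →
    RTyp R Θ sΘ f ls (Δ l r) r (Trm.subst (mkSubst ls.reverse) (Trm.piCodN ls.length (Θ f))))

/-- `R` is accessible: for every rule `f l⃗ → r` with `Θ_f = Πx⃗:T⃗.U`, `|x⃗| = |l⃗|`, and
every substitution `σ`, `σ ⊨ Δ_{f l⃗→r}` whenever `⊢ Θ_f : s_f`, `Θ_f ∈ ⟦s_f⟧` and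
`[x⃗↦l⃗]σ ⊨ x⃗:T⃗`. -/
def Accessible {F : Type} (R : Rules F) (Θ sΘ : F → Trm F) (I : Interp F)
    (Δ : Trm F → Trm F → List (Trm F)) : Prop :=
  ∀ l r, (l, r) ∈ R → ∀ (f : F) ls, l = Trm.appList (.sym f) ls → ∀ σ : ℕ → Trm F,
    Typing R Θ sΘ [] (Θ f) (sΘ f) → Θ f ∈ interp R I (sΘ f) Trm.var →
    Models R I (compSubst (mkSubst ls.reverse) σ) (Trm.teleN ls.length (Θ f)) →
    Models R I σ (Δ l r)

/-- A term in `𝕂 ∪ {KIND}`. -/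
def IsKindLike {F : Type} (t : Trm F) : Prop := Trm.IsKind t ∨ t = .kind

/-- `R` is plain function-passing (PFP): for every rule `f l⃗ → r` with `Θ_f = Πx⃗:T⃗.U` and
`|x⃗| = |l⃗|`, no `l_i` is a kind or `KIND`, and every `(y : T) ∈ Δ_{f l⃗→r}` satisfies:
either there is `i` with `y = l_i` and `T = T_i[x⃗↦l⃗]`, or `y ∈ FV(l_i)` and `T = D t⃗`
with `D` undefined and `|t⃗| = arit(Θ_D)`. -/
def PFP {F : Type} (R : Rules F) (Θ : F → Trm F) (Δ : Trm F → Trm F → List (Trm F)) : Prop :=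
  ∀ l r, (l, r) ∈ R → ∀ (f : F) ls, l = Trm.appList (.sym f) ls →
    (∀ li ∈ ls, ¬ IsKindLike li) ∧
    (∀ i A, (Δ l r)[i]? = some A →
      (∃ (k : ℕ) (Tk : Trm F), ls[k]? = some (Trm.var i) ∧ (Trm.piDoms (Θ f))[k]? = some Tk ∧
        Trm.rename (fun j => j + i + 1) A = Trm.subst (mkSubst ((ls.take k).reverse)) Tk) ∨
      ((∃ (k : ℕ) (lk : Trm F), ls[k]? = some lk ∧ i ∈ Trm.FV lk) ∧
        ∃ (D : F) (ts : List (Trm F)), Trm.rename (fun j => j + i + 1) A =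
          Trm.appList (.sym D) ts ∧ ¬ Defined R D ∧ ts.length = Trm.piArity (Θ D)))

/-! # Size-change termination -/

/-- Entries of size-change matrices: `−1`, `0` or `∞`. -/
inductive SCTe : Type
  | minusOne : SCTe
  | zero : SCTe
  | infty : SCTe
deriving DecidableEq

/-- Min-plus multiplication of entries (addition, truncated at `−1`). -/
def SCTe.comp : SCTe → SCTe → SCTe
  | .infty, _ => .infty
  | _, .infty => .infty
  | .minusOne, _ => .minusOne
  | _, .minusOne => .minusOne
  | .zero, .zero => .zero

/-- Minimum of entries (`−1 < 0 < ∞`). -/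
def SCTe.min : SCTe → SCTe → SCTe
  | .minusOne, _ => .minusOne
  | _, .minusOne => .minusOne
  | .zero, _ => .zero
  | .infty, x => x

/-- Base of the relation `⊵`: `f t₁…t_n ⊵ t_i` for `f ∈ F`. -/
def ArgSubBase {F : Type} (t u : Trm F) : Prop :=
  ∃ (f : F) (ts : List (Trm F)), t = Trm.appList (.sym f) ts ∧ u ∈ ts

/-- `⊵`: the smallest transitive relation such that `f t₁…t_n ⊵ t_i` for `f ∈ F`. -/
def ArgGT {F : Type} : Trm F → Trm F → Prop := Relation.TransGen ArgSubBase

open Classical in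
/-- The size-change matrix of a dependency pair `f l₁…l_p > g m₁…m_q`:
`a_{ij} = −1` if `l_i ⊵ m_j`, `a_{ij} = 0` if `l_i = m_j`, `a_{ij} = ∞` otherwise
(in particular if `i > p` or `j > q`). -/
noncomputable def dpMatrix {F : Type} (ls ms : List (Trm F)) : ℕ → ℕ → SCTe := fun i j =>
  match ls[i]?, ms[j]? with
  | some li, some mj =>
      if ArgGT li mj then .minusOne else if li = mj then .zero else .infty
  | _, _ => .infty

/-- Min-plus product of matrices, the middle dimension being `d`. -/
def matComp (d : ℕ) (M N : ℕ → ℕ → SCTe) : ℕ → ℕ → SCTe := fun i j =>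
  ((List.range d).map fun k => (M i k).comp (N k j)).foldr SCTe.min .infty

/-- The transitive closure of the call graph of `R`: edges are labeled by the matrices of
the dependency pairs, multiplied in the min-plus semiring along paths. -/
inductive TCEdge {F : Type} (R : Rules F) (Θ : F → Trm F) : F → F → (ℕ → ℕ → SCTe) → Prop
  | base {f g : F} {ls ms : List (Trm F)} : DepPair R f ls g ms →
      TCEdge R Θ f g (dpMatrix ls ms)
  | comp {f g h : F} {M N : ℕ → ℕ → SCTe} : TCEdge R Θ f g M → TCEdge R Θ g h N →
      TCEdge R Θ f h (matComp (Trm.piArity (Θ g)) M N)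

/-- `R` is size-change terminating: in the transitive closure of the call graph, every
idempotent matrix labeling a loop has some `−1` on its diagonal. -/
def SCT {F : Type} (R : Rules F) (Θ : F → Trm F) : Prop :=
  ∀ (f : F) (M : ℕ → ℕ → SCTe), TCEdge R Θ f f M → matComp (Trm.piArity (Θ f)) M M = M →
    ∃ i < Trm.piArity (Θ f), M i i = SCTe.minusOne

/-! # Renaming and substitution -/

namespace Trm

variable {F : Type}

theorem rename_rename (t : Trm F) (ρ τ : ℕ → ℕ) :
    rename τ (rename ρ t) = rename (τ ∘ ρ) t := by
  have up_comp (ρ τ : ℕ → ℕ) : upRen τ ∘ upRen ρ = upRen (τ ∘ ρ) := by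
    funext n; cases n <;> rfl
  induction t generalizing ρ τ <;> simp_all [rename]

theorem subst_rename (t : Trm F) (ρ : ℕ → ℕ) (σ : ℕ → Trm F) :
    subst σ (rename ρ t) = subst (σ ∘ ρ) t := by
  have up_comp (ρ : ℕ → ℕ) (σ : ℕ → Trm F) : up σ ∘ upRen ρ = up (σ ∘ ρ) := by
    funext n; cases n <;> rfl
  induction t generalizing ρ σ <;> simp_all [rename, subst]

theorem rename_subst (t : Trm F) (ρ : ℕ → ℕ) (σ : ℕ → Trm F) :
    rename ρ (subst σ t) = subst (rename ρ ∘ σ) t := by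
  have up_comp (ρ : ℕ → ℕ) (σ : ℕ → Trm F) :
      rename (upRen ρ) ∘ up σ = up (rename ρ ∘ σ) := by
    funext n
    cases n with
    | zero => rfl
    | succ n =>
      simp only [Function.comp, up, rename_rename]
      rfl
  induction t generalizing ρ σ <;> simp_all [rename, subst]

theorem rename_subst1 (ρ : ℕ → ℕ) (a b : Trm F) :
    rename ρ (subst1 a b) = subst1 (rename ρ a) (rename (upRen ρ) b) := by
  rw [subst1, subst1, rename_subst, subst_rename]
  congr 1
  funext n; cases n <;> rfl

theorem subst_appList (σ : ℕ → Trm F) (h : Trm F) (vs : List (Trm F)) :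
    subst σ (appList h vs) = appList (subst σ h) (vs.map (subst σ)) := by
  induction vs generalizing h with
  | nil => rfl
  | cons v vs ih => simp [appList, ih, subst]

theorem appList_concat (h : Trm F) (vs : List (Trm F)) (a : Trm F) :
    appList h (vs ++ [a]) = .app (appList h vs) a := by
  induction vs generalizing h with
  | nil => rfl
  | cons v vs ih => simp [appList, ih]

/-- The head of an iterated application. -/
def head : Trm F → Trm F
  | .app t _ => head t
  | t => t

/-- The number of arguments of an iterated application. -/
def numArgs : Trm F → ℕ
  | .app t _ => numArgs t + 1
  | _ => 0

theorem head_appList (h : Trm F) (vs : List (Trm F)) : (appList h vs).head = h.head := by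
  induction vs generalizing h with
  | nil => rfl
  | cons v vs ih => simp [appList, ih, head]

theorem numArgs_appList (h : Trm F) (vs : List (Trm F)) :
    (appList h vs).numArgs = h.numArgs + vs.length := by
  induction vs generalizing h with
  | nil => rfl
  | cons v vs ih => simp [appList, ih, numArgs]; omega

end Trm

/-! # Reduction -/

section Reduction

variable {F : Type} {R : Rules F}

theorem Red.rename {t u : Trm F} (h : Red R t u) (ρ : ℕ → ℕ) :
    Red R (t.rename ρ) (u.rename ρ) := by
  induction h generalizing ρ with
  | beta A b a => rw [Trm.rename_subst1]; exact .beta _ _ _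
  | rule σ h => rw [Trm.rename_subst, Trm.rename_subst]; exact .rule _ h
  | appL _ ih => exact .appL (ih ρ)
  | appR _ ih => exact .appR (ih ρ)
  | piL _ ih => exact .piL (ih ρ)
  | piR _ ih => exact .piR (ih _)
  | lamL _ ih => exact .lamL (ih ρ)
  | lamR _ ih => exact .lamR (ih _)

theorem RedStar.lift (g : Trm F → Trm F) (hg : ∀ t u, Red R t u → Red R (g t) (g u))
    {t u : Trm F} (h : RedStar R t u) : RedStar R (g t) (g u) := by
  induction h with
  | refl => exact .refl
  | tail _ h ih => exact ih.tail (hg _ _ h)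

theorem RedStar.pi {A A' B B' : Trm F} (hA : RedStar R A A') (hB : RedStar R B B') :
    RedStar R (.pi A B) (.pi A' B') :=
  (RedStar.lift (fun X => Trm.pi X B) (fun _ _ => .piL) hA).trans
    (RedStar.lift (Trm.pi A') (fun _ _ => .piR) hB)

theorem RedStar.app {t t' u u' : Trm F} (ht : RedStar R t t') (hu : RedStar R u u') :
    RedStar R (.app t u) (.app t' u') :=
  (RedStar.lift (fun X => Trm.app X u) (fun _ _ => .appL) ht).trans
    (RedStar.lift (Trm.app t') (fun _ _ => .appR) hu)

theorem RedStar.lam {A A' b b' : Trm F} (hA : RedStar R A A') (hb : RedStar R b b') :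
    RedStar R (.lam A b) (.lam A' b') :=
  (RedStar.lift (fun X => Trm.lam X b) (fun _ _ => .lamL) hA).trans
    (RedStar.lift (Trm.lam A') (fun _ _ => .lamR) hb)

theorem RedStar.subst {σ τ : ℕ → Trm F} (h : ∀ n, RedStar R (σ n) (τ n)) (t : Trm F) :
    RedStar R (t.subst σ) (t.subst τ) := by
  have up_red {σ τ : ℕ → Trm F} (h : ∀ n, RedStar R (σ n) (τ n)) (n : ℕ) :
      RedStar R (Trm.up σ n) (Trm.up τ n) := by
    cases n with
    | zero => exact .refl
    | succ n =>
      exact RedStar.lift (Trm.rename Nat.succ) (fun _ _ r => r.rename _) (h n)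
  induction t generalizing σ τ with
  | type => exact .refl
  | kind => exact .refl
  | var n => exact h n
  | sym f => exact .refl
  | pi A B ihA ihB => exact (ihA h).pi (ihB (up_red h))
  | app t u iht ihu => exact (iht h).app (ihu h)
  | lam A b ihA ihb => exact (ihA h).lam (ihb (up_red h))

theorem RedStar.subst1 {a a' : Trm F} (h : Red R a a') (B : Trm F) :
    RedStar R (Trm.subst1 a B) (Trm.subst1 a' B) :=
  RedStar.subst (fun n => by cases n; exacts [.single h, .refl]) B

theorem SN.of_app {t a : Trm F} (h : SN R (.app t a)) : SN R t :=
  Subrelation.accessible (fun r => Red.appL r)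
    (InvImage.accessible (fun t => Trm.app t a) h)

/-- In a locally confluent system, every reduct of a terminating term reduces to each of its
normal forms. -/
theorem SN.redStar_normalForm (hconf : LocallyConfluent R) {t u v : Trm F} (ht : SN R t)
    (hu : RedStar R t u) (hv : RedStar R t v) (hnf : NormalForm R v) : RedStar R u v := by
  induction ht generalizing u v with
  | intro t _ ih =>
    rcases Relation.ReflTransGen.cases_head hu with rfl | ⟨t₁, h₁, hu₁⟩
    · exact hv
    rcases Relation.ReflTransGen.cases_head hv with rfl | ⟨t₂, h₂, hv₂⟩
    · exact absurd h₁ (hnf _)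
    obtain ⟨w, hw₁, hw₂⟩ := hconf _ _ _ h₁ h₂
    exact ih _ h₁ hu₁ (hw₁.trans (ih _ h₂ hw₂ hv₂ hnf)) hnf

theorem NormalForm.eq_of_redStar {t u : Trm F} (ht : NormalForm R t) (h : RedStar R t u) :
    t = u := by
  rcases Relation.ReflTransGen.cases_head h with h | ⟨_, h, _⟩
  · exact h
  · exact absurd h (ht _)

theorem isCompPred_SNset : IsCompPred R (SNset R) :=
  ⟨subset_rfl, fun _ ht _ h => Acc.inv ht h, fun _ _ h => Acc.intro _ h⟩

theorem Neutral.app {t : Trm F} (h : Neutral R t) (a : Trm F) : Neutral R (.app t a) := by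
  rcases h with ⟨A, b, u, vs, rfl⟩ | ⟨x, vs, rfl⟩ | ⟨f, vs, rfl, hf⟩
  · exact .inl ⟨A, b, u, vs ++ [a], (Trm.appList_concat _ _ _).symm⟩
  · exact .inr (.inl ⟨x, vs ++ [a], (Trm.appList_concat _ _ _).symm⟩)
  · refine .inr (.inr ⟨f, vs ++ [a], (Trm.appList_concat _ _ _).symm, fun ls r h => ?_⟩)
    have := hf ls r h
    simp; omega

theorem neutral_var (x : ℕ) : Neutral R (.var x) := .inr (.inl ⟨x, [], rfl⟩)

theorem normalForm_var (hRS : IsRewriteSystem R) (x : ℕ) : NormalForm R (.var x) := by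
  intro u h
  generalize ht : Trm.var x = t at h
  cases h with
  | rule σ h =>
    obtain ⟨f, ls, hl⟩ := (hRS _ h).2
    dsimp only at hl
    subst hl
    have := congrArg Trm.head ht
    simp [Trm.subst_appList, Trm.head_appList, Trm.subst, Trm.head] at this
  | _ => cases ht

/-- Applying a neutral term creates no redex at the root. -/
theorem Neutral.red_app (hRS : IsRewriteSystem R) {t a w : Trm F} (hn : Neutral R t)
    (h : Red R (.app t a) w) :
    (∃ t', Red R t t' ∧ w = .app t' a) ∨ ∃ a', Red R a a' ∧ w = .app t a' := by
  generalize hs : Trm.app t a = s at h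
  cases h with
  | appL h => cases hs; exact .inl ⟨_, h, rfl⟩
  | appR h => cases hs; exact .inr ⟨_, h, rfl⟩
  | beta A b c =>
    cases hs
    rcases hn with ⟨A, b, u, vs, h⟩ | ⟨x, vs, h⟩ | ⟨f, vs, h, -⟩
    · have := congrArg Trm.numArgs h
      simp [Trm.numArgs_appList, Trm.numArgs] at this
      omega
    · have := congrArg Trm.head h
      simp [Trm.head_appList, Trm.head] at this
    · have := congrArg Trm.head h
      simp [Trm.head_appList, Trm.head] at this
  | rule σ h =>
    obtain ⟨f, ls, hl⟩ := (hRS _ h).2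
    dsimp only at hl
    subst hl
    rw [Trm.subst_appList] at hs
    have hhead := congrArg Trm.head hs
    have hargs := congrArg Trm.numArgs hs
    simp only [Trm.head_appList, Trm.numArgs_appList, Trm.head, Trm.numArgs, Trm.subst,
      List.length_map] at hhead hargs
    rcases hn with ⟨A, b, u, vs, rfl⟩ | ⟨x, vs, rfl⟩ | ⟨g, vs, rfl, hg⟩
    · simp [Trm.head_appList, Trm.head] at hhead
    · simp [Trm.head_appList, Trm.head] at hhead
    · simp only [Trm.head_appList, Trm.head, Trm.sym.injEq] at hhead
      subst hhead
      have := hg _ _ h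
      simp only [Trm.numArgs_appList, Trm.numArgs] at hargs
      omega
  | _ => cases hs

end Reduction

/-! # The interpretation functional and its least fixpoint -/

section Interpretation

variable {F : Type} {R : Rules F} {I J : Interp F}

theorem InterpLE.dom (h : InterpLE I J) {T : Trm F} (hT : (I T).Dom) : (J T).Dom :=
  Part.dom_iff_mem.2 ⟨_, h _ _ (Part.get_mem hT)⟩

theorem InterpLE.mem_of_dom (h : InterpLE I J) {T : Trm F} {S : Set (Trm F)} (hT : (I T).Dom)
    (hS : S ∈ J T) : S ∈ I T := by
  have := Part.get_mem hT
  rwa [Part.mem_unique hS (h _ _ this)]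

theorem domD_mono (h : InterpLE I J) : domD R I ⊆ domD R J := fun _ hT =>
  ⟨hT.1, fun A B hAB => ⟨h.dom (hT.2 A B hAB).1, fun S hS a ha =>
    h.dom ((hT.2 A B hAB).2 S (h.mem_of_dom (hT.2 A B hAB).1 hS) a ha)⟩⟩

theorem InterpLE.piPart_eq (h : InterpLE I J) {A B : Trm F} (hA : (I A).Dom)
    (hB : ∀ S ∈ I A, ∀ a ∈ S, (I (Trm.subst1 a B)).Dom) : piPart I A B = piPart J A B := by
  ext t
  refine ⟨fun ht S hS a ha S' hS' => ?_, fun ht S hS a ha S' hS' => ?_⟩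
  · have hS := h.mem_of_dom hA hS
    exact ht S hS a ha S' (h.mem_of_dom (hB S hS a ha) hS')
  · exact ht S (h _ _ hS) a ha S' (h _ _ hS')

theorem interpF_mono (h : InterpLE I J) : InterpLE (interpF R I) (interpF R J) := by
  rintro T S ⟨hT, rfl⟩
  refine ⟨domD_mono h hT, ?_⟩
  dsimp only [interpF]
  split_ifs with hpi
  · have := hT.2 _ _ hpi.choose_spec.choose_spec.1
    exact (h.piPart_eq this.1 this.2).symm
  · rfl

theorem eq_SNset_of_mem_interpF {T : Trm F} {S : Set (Trm F)} (hS : S ∈ interpF R I T)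
    (h : ¬ ∃ A B, RedStar R T (.pi A B) ∧ NormalForm R (.pi A B)) : S = SNset R := by
  obtain ⟨_, rfl⟩ := hS
  exact dif_neg h

theorem eq_piPart_of_mem_interpF (hconf : LocallyConfluent R) {T A B : Trm F}
    {S : Set (Trm F)} (hS : S ∈ interpF R I T) (h : RedStar R T (.pi A B))
    (hnf : NormalForm R (.pi A B)) : S = piPart I A B := by
  obtain ⟨hT, rfl⟩ := hS
  have hpi : ∃ A B, RedStar R T (.pi A B) ∧ NormalForm R (.pi A B) := ⟨A, B, h, hnf⟩
  have heq := hnf.eq_of_redStar (hT.1.redStar_normalForm hconf h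
    hpi.choose_spec.choose_spec.1 hpi.choose_spec.choose_spec.2)
  injection heq with hA hB
  refine (dif_pos hpi).trans ?_
  exact congrArg₂ (piPart I) hA.symm hB.symm

/-- The interpretation is invariant by reduction. -/
theorem interpF_eq_of_redStar (hconf : LocallyConfluent R) {T T' : Trm F}
    {S S' : Set (Trm F)} (h : RedStar R T T') (hS : S ∈ interpF R I T)
    (hS' : S' ∈ interpF R I T') : S = S' := by
  have hT : SN R T := hS.1.1
  by_cases hpi : ∃ A B, RedStar R T (.pi A B) ∧ NormalForm R (.pi A B)
  · obtain ⟨A, B, hAB, hnf⟩ := hpi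
    rw [eq_piPart_of_mem_interpF hconf hS hAB hnf,
      eq_piPart_of_mem_interpF hconf hS' (hT.redStar_normalForm hconf h hAB hnf) hnf]
  · rw [eq_SNset_of_mem_interpF hS hpi, eq_SNset_of_mem_interpF hS'
      fun ⟨A, B, hAB, hnf⟩ => hpi ⟨A, B, h.trans hAB, hnf⟩]

/-- Restriction of a partial interpretation to a set of terms. -/
def Interp.restrict (I : Interp F) (X : Set (Trm F)) : Interp F := fun T =>
  ⟨T ∈ X ∧ (I T).Dom, fun h => (I T).get h.2⟩

theorem Interp.mem_restrict {X : Set (Trm F)} {T : Trm F} {S : Set (Trm F)} :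
    S ∈ I.restrict X T ↔ T ∈ X ∧ S ∈ I T :=
  ⟨fun ⟨h, e⟩ => ⟨h.1, h.2, e⟩, fun ⟨hT, h, e⟩ => ⟨⟨hT, h⟩, e⟩⟩

/-- Induction on the domain of the least fixpoint of `interpF`. -/
theorem IsLfpInterp.dom_subset (hI : IsLfpInterp (interpF R) I) {X : Set (Trm F)}
    (hX : domD R (I.restrict X) ⊆ X) {T : Trm F} (hT : (I T).Dom) : T ∈ X := by
  let φ : Set (Trm F) →o Set (Trm F) :=
    ⟨fun Y => domD R (I.restrict Y), fun Y Z hYZ => domD_mono fun T S hS => by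
      rw [Interp.mem_restrict] at hS ⊢
      exact ⟨hYZ hS.1, hS.2⟩⟩
  have hfix : domD R (I.restrict φ.lfp) = φ.lfp := φ.map_lfp
  have hle : InterpLE (interpF R (I.restrict φ.lfp)) I := by
    have := interpF_mono (R := R) (I := I.restrict φ.lfp) (J := I)
      fun T S hS => (Interp.mem_restrict.1 hS).2
    rwa [hI.1] at this
  have hfix' : interpF R (I.restrict φ.lfp) = I.restrict φ.lfp := by
    funext T
    refine Part.ext fun S => ⟨fun hS => Interp.mem_restrict.2 ⟨?_, hle _ _ hS⟩, fun hS => ?_⟩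
    · rw [← hfix]; exact hS.1
    · obtain ⟨hT, hS⟩ := Interp.mem_restrict.1 hS
      rw [← hfix] at hT
      exact hle.mem_of_dom hT hS
  have hmem := Interp.mem_restrict.1 (hI.2 _ hfix' _ _ (Part.get_mem hT))
  exact φ.lfp_le hX hmem.1

/-- Products of computability predicates are computability predicates. -/
theorem isCompPred_piPart (hRS : IsRewriteSystem R) {A B : Trm F} (hA : (I A).Dom)
    (hA' : ∀ S ∈ I A, IsCompPred R S)
    (hB : ∀ S ∈ I A, ∀ a ∈ S, (I (Trm.subst1 a B)).Dom)
    (hB' : ∀ S ∈ I A, ∀ a ∈ S, ∀ S' ∈ I (Trm.subst1 a B), IsCompPred R S')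
    (hinv : ∀ T T' S S', RedStar R T T' → S ∈ I T → S' ∈ I T' → S = S') :
    IsCompPred R (piPart I A B) := by
  refine ⟨fun t ht => ?_, fun t ht u htu S hS a ha S' hS' => ?_, fun t hn ht => ?_⟩
  · have hS := Part.get_mem hA
    have hx : Trm.var 0 ∈ (I A).get hA :=
      (hA' _ hS).2.2 _ (neutral_var 0) fun u h => absurd h (normalForm_var hRS 0 u)
    have hS' := Part.get_mem (hB _ hS _ hx)
    exact SN.of_app ((hB' _ hS _ hx _ hS').1 (ht _ hS _ hx _ hS'))
  · exact (hB' S hS a ha S' hS').2.1 _ (ht S hS a ha S' hS') _ (.appL htu)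
  · intro S hS a ha
    have hsn : SN R a := (hA' S hS).1 ha
    induction hsn with
    | intro a _ ih =>
      intro S' hS'
      refine (hB' S hS a ha S' hS').2.2 _ (hn.app a) fun w hw => ?_
      rcases hn.red_app hRS hw with ⟨t', h, rfl⟩ | ⟨a', h, rfl⟩
      · exact ht t' h S hS a ha S' hS'
      · have ha' := (hA' S hS).2.1 a ha a' h
        have hS'' := Part.get_mem (hB S hS a' ha')
        rw [hinv _ _ _ _ (RedStar.subst1 h B) hS' hS'']
        exact ih a' h ha' _ hS''

end Interpretation

/-- Lemma 18 of the appendix. For every `T ∈ 𝒟`, the set `ℐ(T)` is a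
computability predicate. -/
theorem calI_comp_pred {F : Type} (R : Rules F)
    (hRS : IsRewriteSystem R)
    (hconf : LocallyConfluent R)
    (calI : Interp F) (hlfp : IsLfpInterp (interpF R) calI) :
    ∀ T ∈ domD R calI, ∀ S ∈ calI T, IsCompPred R S := by
  intro T hT
  have hdom : (calI T).Dom := by rw [← hlfp.1]; exact hT
  refine hlfp.dom_subset (X := {T | ∀ S ∈ calI T, IsCompPred R S}) (fun T hT S hS => ?_) hdom
  rw [← hlfp.1] at hS
  by_cases hpi : ∃ A B, RedStar R T (.pi A B) ∧ NormalForm R (.pi A B)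
  · obtain ⟨A, B, hAB, hnf⟩ := hpi
    rw [eq_piPart_of_mem_interpF hconf hS hAB hnf]
    obtain ⟨hA, hB⟩ := hT.2 A B hAB
    have hB' (S) (hS : S ∈ calI A) := hB S (Interp.mem_restrict.2 ⟨hA.1, hS⟩)
    refine isCompPred_piPart hRS hA.2 hA.1 (fun S hS a ha => (hB' S hS a ha).2)
      (fun S hS a ha => (hB' S hS a ha).1) fun T T' S S' h hS hS' => ?_
    rw [← hlfp.1] at hS hS'
    exact interpF_eq_of_redStar hconf h hS hS'
  · rw [eq_SNset_of_mem_interpF hS hpi]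
    exact isCompPred_SNset
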